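/- Under the standing assumptions with |Cl(R)| ≠ 2 and O transfer Krull via a Krull overmonoid H: for all a, b ∈ Reg_f(R) with a associated to b in H, one has β(a) = β(b). -/

import Mathlib

open scoped nonZeroDivisors

section MonoidDefs
variable {H B : Type*} [CommMonoid H] [CommMonoid B]

/-- The set of lengths of `a`: `{0}` for units, otherwise the set of `k` such that
`a` is a product of `k` atoms (irreducible elements). -/
def lengthsSet (a : H) : Set ℕ :=
  {k | (IsUnit a ∧ k = 0) ∨
    (¬ IsUnit a ∧ ∃ l : Multiset H, Multiset.card l = k ∧ (∀ x ∈ l, Irreducible x) ∧ l.prod = a)}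

/-- A transfer homomorphism: (T1) `B = θ(H)·B^×` and `θ⁻¹(B^×) = H^×`;
(T2) factorizations of `θ u` lift to factorizations of `u` up to associates. -/
def IsTransferHom (θ : H →* B) : Prop :=
  (∀ b : B, ∃ u : H, ∃ ε : Bˣ, b = θ u * ε) ∧
  (∀ u : H, IsUnit (θ u) → IsUnit u) ∧
  (∀ u : H, ∀ b c : B, θ u = b * c →
    ∃ v w : H, u = v * w ∧ Associated (θ v) b ∧ Associated (θ w) c)

/-- A Krull monoid: a monoid admitting a divisor homomorphism into a
free abelian monoid. -/
def IsKrullMonoid (H : Type*) [CommMonoid H] : Prop :=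
  ∃ (ι : Type) (d : H →* Multiplicative (ι →₀ ℕ)), ∀ a b : H, d a ∣ d b → a ∣ b

/-- Half-factorial: all factorizations of an element into atoms have the same length. -/
def IsHalfFactorial (A : Type*) [CommMonoid A] : Prop :=
  ∀ (a : A) (l m : Multiset A), (∀ x ∈ l, Irreducible x) → (∀ x ∈ m, Irreducible x) →
    l.prod = a → m.prod = a → Multiset.card l = Multiset.card m

/-- An absolutely irreducible element: an atom all of whose powers factor uniquely
into atoms, up to associates. -/
def AbsolutelyIrreducible (a : H) : Prop :=
  Irreducible a ∧ ∀ n : ℕ, 0 < n → ∀ l m : Multiset H,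
    (∀ x ∈ l, Irreducible x) → (∀ x ∈ m, Irreducible x) →
    l.prod = a ^ n → m.prod = a ^ n → Multiset.Rel Associated l m

end MonoidDefs

section RingDefs
variable {R : Type*} [CommRing R]

/-- The conductor of a subring `O ⊆ R`: the largest ideal of `R` contained in `O`. -/
def Subring.conductor (O : Subring R) : Ideal R where
  carrier := {x | ∀ r : R, x * r ∈ O}
  add_mem' := by
    intro a b ha hb r
    have h : (a + b) * r = a * r + b * r := by ring
    rw [h]; exact O.add_mem (ha r) (hb r)
  zero_mem' := by intro r; simpa using O.zero_mem
  smul_mem' := by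
    intro c x hx r
    have h : c • x * r = x * (c * r) := by simp [smul_eq_mul]; ring
    rw [h]; exact hx (c * r)

/-- `a` is a regular element modulo the ideal `f`. -/
def RegF (f : Ideal R) (a : R) : Prop := IsUnit (Ideal.Quotient.mk f a)

end RingDefs

section TK
variable {K : Type*} [CommRing K]

/-- `x` and `y` are associated within the submonoid `H` of `K`. -/
def AssocIn (H : Submonoid K) (x y : K) : Prop :=
  ∃ ε ∈ H, (∃ ε' ∈ H, ε * ε' = 1) ∧ x = y * ε

end TK

variable {R₀ : Type*}

/-- `H` is a Krull overmonoid of `O^∙` inside the quotient field of `O` (which is the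
quotient field of `R`), with `O^∙ ⊆ H ⊆ q(O^∙)`, such that the inclusion `O^∙ ↪ H`
is a transfer homomorphism; this witnesses that `O` is transfer Krull. -/
structure IsTKOvermonoid {R : Type*} [CommRing R] [IsDomain R] [IsDedekindDomain R]
    (O : Subring R) (H : Submonoid (FractionRing R)) : Prop where
  nonzero : ∀ x ∈ H, x ≠ 0
  incl : ∀ a : R, a ∈ O → a ≠ 0 → algebraMap R (FractionRing R) a ∈ H
  inQuot : ∀ x ∈ H, ∃ a b : R, a ∈ O ∧ b ∈ O ∧ a ≠ 0 ∧ b ≠ 0 ∧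
    x * algebraMap R (FractionRing R) b = algebraMap R (FractionRing R) a
  krull : IsKrullMonoid ↥H
  t1 : ∀ x ∈ H, ∃ a : R, a ∈ O ∧ a ≠ 0 ∧ ∃ ε ∈ H, (∃ ε' ∈ H, ε * ε' = 1) ∧
    x = algebraMap R (FractionRing R) a * ε
  t1' : ∀ a : R, a ∈ O → a ≠ 0 →
    (∃ y ∈ H, algebraMap R (FractionRing R) a * y = 1) → ∃ b ∈ O, a * b = 1
  t2 : ∀ a : R, a ∈ O → a ≠ 0 → ∀ x ∈ H, ∀ y ∈ H,
    algebraMap R (FractionRing R) a = x * y →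
    ∃ v w : R, v ∈ O ∧ w ∈ O ∧ a = v * w ∧
      AssocIn H (algebraMap R (FractionRing R) v) x ∧
      AssocIn H (algebraMap R (FractionRing R) w) y

open Classical in
/-- The block homomorphism `β`: sends `a` to the multiset of ideal classes of the primes
dividing `aR`, with multiplicity. -/
noncomputable def blockOf {R : Type*} [CommRing R] [IsDomain R] [IsDedekindDomain R]
    (a : R) : Multiset (ClassGroup R) :=
  (UniqueFactorizationMonoid.normalizedFactors (Ideal.span {a})).map
    (fun I => if h : I ∈ (Ideal R)⁰ then ClassGroup.mk0 ⟨I, h⟩ else 1)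

/-
Taking prime factorizations identifies the elements of `R` prime to the conductor, up to units, with
the blocks over the class group, and passing to divisibility in `H` gives a homomorphism `θ` on the
block monoid. A regular element has a power in `O`, so the transfer property of `H` yields: a
decomposition of `θ s` in `H` lifts to a decomposition of a multiple of `s` into blocks.

Since classes have finite order, each prime `P` has a primary block `P ^ ord P`. Comparing the sizes
of the pieces of lifted decompositions shows that `θ` determines the class of a prime from its
primary block, provided the class group does not have order two: there, the trivial and the
nontrivial class could be confused. If `θ a = θ b`, then a power of `b` decomposes in `H` as the
primary blocks of the primes of `a` in a given class, times a further factor; counting primes of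
that class in the lifted pieces shows that `b` contains at least as many of them as `a`.
-/

section BlockMonoid

variable {X G : Type*} [CommGroup G]

/-- The block monoid over `cls : X → G`: the finite unordered sequences in `X`, written
additively, whose product of classes is one. -/
def blockMonoid (cls : X → G) : AddSubmonoid (Multiset X) where
  carrier := {s | (s.map cls).prod = 1}
  zero_mem' := by simp
  add_mem' := by
    intro s t (hs : (s.map cls).prod = 1) (ht : (t.map cls).prod = 1)
    simp [hs, ht]

variable {cls : X → G}

theorem mem_blockMonoid {s : Multiset X} : s ∈ blockMonoid cls ↔ (s.map cls).prod = 1 :=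
  Iff.rfl

theorem mem_blockMonoid_of_add_mem {s t : Multiset X} (hst : s + t ∈ blockMonoid cls)
    (hs : s ∈ blockMonoid cls) : t ∈ blockMonoid cls := by
  rw [mem_blockMonoid] at *
  simpa [hs] using hst

theorem replicate_mem_blockMonoid {n : ℕ} {P : X} (h : cls P ^ n = 1) :
    Multiset.replicate n P ∈ blockMonoid cls := by
  simpa [mem_blockMonoid] using h

/-- The block consisting of `orderOf (cls P)` copies of `P`; for classes of finite order these
are the blocks generating the extremal rays of the block monoid. -/
noncomputable def primaryBlock (cls : X → G) (P : X) : blockMonoid cls :=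
  ⟨Multiset.replicate (orderOf (cls P)) P, replicate_mem_blockMonoid (pow_orderOf_eq_one _)⟩

theorem coe_primaryBlock (P : X) :
    (primaryBlock cls P : Multiset X) = Multiset.replicate (orderOf (cls P)) P :=
  rfl

theorem primaryBlock_ne_zero (htor : IsMulTorsion G) (P : X) : primaryBlock cls P ≠ 0 := by
  intro h
  have hcard := congrArg (fun s : blockMonoid cls => Multiset.card (s : Multiset X)) h
  simp only [coe_primaryBlock, Multiset.card_replicate, ZeroMemClass.coe_zero,
    Multiset.card_zero] at hcard
  exact (htor (cls P)).orderOf_pos.ne' hcard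

theorem orderOf_dvd_card_of_cls_eq {v : blockMonoid cls} {g : G}
    (hv : ∀ P ∈ (v : Multiset X), cls P = g) :
    orderOf g ∣ Multiset.card (v : Multiset X) := by
  refine orderOf_dvd_of_pow_eq_one ?_
  rw [← Multiset.prod_replicate, ← Multiset.map_const', ← Multiset.map_congr rfl hv]
  exact v.2

theorem orderOf_le_card_of_cls_eq {v : blockMonoid cls} {g : G}
    (hv : ∀ P ∈ (v : Multiset X), cls P = g)
    (hv0 : v ≠ 0) : orderOf g ≤ Multiset.card (v : Multiset X) :=
  Nat.le_of_dvd (Multiset.card_pos.2 (by simpa using hv0)) (orderOf_dvd_card_of_cls_eq hv)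

theorem exists_eq_nsmul_primaryBlock {v : blockMonoid cls} {Q : X}
    (hv : ∀ P ∈ (v : Multiset X), P = Q) : ∃ j : ℕ, v = j • primaryBlock cls Q := by
  obtain ⟨j, hj⟩ := orderOf_dvd_card_of_cls_eq (g := cls Q) fun P hP => by rw [hv P hP]
  refine ⟨j, Subtype.ext ?_⟩
  rw [AddSubmonoidClass.coe_nsmul, coe_primaryBlock, Multiset.nsmul_replicate, mul_comm, ← hj]
  exact Multiset.eq_replicate_card.2 hv

theorem exists_orderOf_nsmul_eq_sum_primaryBlock_add (s : blockMonoid cls) {g : G}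
    {t₁ t₂ : Multiset X} (ht₁ : ∀ P ∈ t₁, cls P = g) (hs : (s : Multiset X) = t₁ + t₂) :
    ∃ u : blockMonoid cls, (u : Multiset X) = orderOf g • t₂ ∧
      orderOf g • s = (t₁.map (primaryBlock cls)).sum + u := by
  have hprim : (((t₁.map (primaryBlock cls)).sum : blockMonoid cls) : Multiset X) =
      orderOf g • t₁ := by
    rw [AddSubmonoid.coe_multiset_sum, Multiset.map_map]
    calc (t₁.map fun P => (primaryBlock cls P : Multiset X)).sum
        = (t₁.map fun P => orderOf g • ({P} : Multiset X)).sum := by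
          refine congrArg _ (Multiset.map_congr rfl fun P hP => ?_)
          rw [coe_primaryBlock, ht₁ P hP, Multiset.nsmul_singleton]
      _ = orderOf g • t₁ := by rw [Multiset.sum_map_nsmul, Multiset.sum_map_singleton]
  have hsum : ((orderOf g • s : blockMonoid cls) : Multiset X) =
      (t₁.map (primaryBlock cls)).sum + orderOf g • t₂ := by
    rw [AddSubmonoidClass.coe_nsmul, hs, nsmul_add, hprim]
  have hmem : orderOf g • t₂ ∈ blockMonoid cls :=
    mem_blockMonoid_of_add_mem (hsum ▸ (orderOf g • s).2) (t₁.map (primaryBlock cls)).sum.2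
  exact ⟨⟨_, hmem⟩, rfl, Subtype.ext hsum⟩

theorem exists_orderOf_nsmul_eq_primaryBlock_add (s : blockMonoid cls) {P : X} {t : Multiset X}
    (hs : (s : Multiset X) = P ::ₘ t) :
    ∃ u : blockMonoid cls, (u : Multiset X) = orderOf (cls P) • t ∧
      orderOf (cls P) • s = primaryBlock cls P + u := by
  simpa using exists_orderOf_nsmul_eq_sum_primaryBlock_add s (t₁ := {P}) (t₂ := t)
    (g := cls P) (by simp) hs

end BlockMonoid

/-- A homomorphism `θ` from a block monoid into an additive group is a transfer homomorphism up to
multiples into the isolated submonoid `Λ` when every decomposition of `θ s` inside `Λ` comes, after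
replacing `s` by some positive multiple, from a decomposition of blocks. -/
structure IsTransferUpToMultiples {X G A : Type*} [CommGroup G] [AddCommGroup A] {cls : X → G}
    (θ : blockMonoid cls →+ A) (Λ : AddSubmonoid A) : Prop where
  map_mem : ∀ s, θ s ∈ Λ
  mem_of_nsmul_mem : ∀ {n : ℕ} {x : A}, 0 < n → n • x ∈ Λ → x ∈ Λ
  exists_lift : ∀ (s : blockMonoid cls) (L : Multiset A), (∀ x ∈ L, x ∈ Λ) → θ s = L.sum →
    ∃ N : ℕ, 0 < N ∧ ∃ V : Multiset (blockMonoid cls), V.sum = N • s ∧ V.map θ = N • L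

namespace IsTransferUpToMultiples

variable {X G A : Type*} [CommGroup G] [AddCommGroup A] {cls : X → G}
  {θ : blockMonoid cls →+ A} {Λ : AddSubmonoid A}

theorem eq_zero_of_map_eq_zero (hθ : IsTransferUpToMultiples θ Λ) {s : blockMonoid cls}
    (hs : θ s = 0) : s = 0 := by
  obtain ⟨N, hN, V, hV, hVθ⟩ := hθ.exists_lift s 0 (by simp) (by simpa using hs)
  obtain rfl : V = 0 := by simpa using hVθ
  have hNs : N • (s : Multiset X) = 0 := by
    rw [← AddSubmonoidClass.coe_nsmul, ← hV, Multiset.sum_zero, ZeroMemClass.coe_zero]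
  exact Subtype.ext ((smul_eq_zero.1 hNs).resolve_left hN.ne')

theorem map_primaryBlock_ne_zero (hθ : IsTransferUpToMultiples θ Λ) (htor : IsMulTorsion G)
    (P : X) : θ (primaryBlock cls P) ≠ 0 :=
  fun h => primaryBlock_ne_zero htor P (hθ.eq_zero_of_map_eq_zero h)

/- Pigeonhole: lifting the decomposition gives `N * card L` pieces with values in `L` and with sum
at most `N • s`, and `φ` is additive. -/
theorem exists_piece_lt (hθ : IsTransferUpToMultiples θ Λ) (φ : Multiset X →+ ℕ)
    {s : blockMonoid cls} {L : Multiset A} {y : A} (hL : ∀ x ∈ L, x ∈ Λ) (hy : y ∈ Λ)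
    (h : θ s = L.sum + y) {t : ℕ} (ht : φ s < Multiset.card L * t) :
    ∃ v : blockMonoid cls, (v : Multiset X) ⊆ s ∧ θ v ∈ L ∧ φ v < t := by
  classical
  obtain ⟨N, hN, V, hVs, hVθ⟩ := hθ.exists_lift s (y ::ₘ L)
    (by simpa using ⟨hy, hL⟩) (by rw [h, Multiset.sum_cons, add_comm])
  have hVsum : (V.map fun v : blockMonoid cls => (v : Multiset X)).sum = N • (s : Multiset X) := by
    rw [← AddSubmonoidClass.coe_nsmul, ← hVs, AddSubmonoid.coe_multiset_sum]
  by_contra! hbig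
  have hpiece : ∀ v ∈ V, (if θ v ∈ L then t else 0) ≤ φ v := by
    intro v hv
    split_ifs with hvL
    · have hle : (v : Multiset X) ≤ N • (s : Multiset X) :=
        hVsum ▸ Multiset.le_sum_of_mem (Multiset.mem_map_of_mem _ hv)
      exact hbig v (fun P hP => Multiset.mem_of_mem_nsmul (Multiset.mem_of_le hle hP)) hvL
    · exact Nat.zero_le _
  have hφ : N * (Multiset.card L * t) ≤ N * φ s := by
    calc N * (Multiset.card L * t) = N * (L.map fun x => if x ∈ L then t else 0).sum := by
          rw [Multiset.map_congr rfl fun x hx => if_pos hx, Multiset.map_const',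
            Multiset.sum_replicate, smul_eq_mul]
      _ ≤ N * ((y ::ₘ L).map fun x => if x ∈ L then t else 0).sum := by
          rw [Multiset.map_cons, Multiset.sum_cons]
          gcongr
          exact Nat.le_add_left _ _
      _ = (V.map fun v => if θ v ∈ L then t else 0).sum := by
          rw [← smul_eq_mul, ← Multiset.sum_nsmul, ← Multiset.map_nsmul, ← hVθ, Multiset.map_map]
          rfl
      _ ≤ (V.map fun v : blockMonoid cls => φ v).sum := Multiset.sum_map_le_sum_map _ _ hpiece
      _ = N * φ s := by
          rw [← smul_eq_mul, ← map_nsmul, ← hVsum, map_multiset_sum, Multiset.map_map]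
          rfl
  exact ht.not_ge (Nat.le_of_mul_le_mul_left hφ hN)

theorem exists_piece (hθ : IsTransferUpToMultiples θ Λ) {s : blockMonoid cls} {x y : A}
    (hx : x ∈ Λ) (hy : y ∈ Λ) (h : θ s = x + y) :
    ∃ v : blockMonoid cls, (v : Multiset X) ⊆ s ∧ θ v = x := by
  obtain ⟨v, hvs, hvx, -⟩ := hθ.exists_piece_lt (0 : Multiset X →+ ℕ) (L := {x}) (t := 1)
    (by simpa using hx) hy (by simpa using h) (by simp)
  exact ⟨v, hvs, Multiset.mem_singleton.1 hvx⟩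

theorem exists_piece_lt_of_map_eq_nsmul (hθ : IsTransferUpToMultiples θ Λ) (φ : Multiset X →+ ℕ)
    {s : blockMonoid cls} {n : ℕ} {x : A} (hx : x ∈ Λ) (h : θ s = n • x) {t : ℕ}
    (ht : φ s < n * t) :
    ∃ v : blockMonoid cls, (v : Multiset X) ⊆ s ∧ θ v = x ∧ φ v < t := by
  obtain ⟨v, hvs, hvx, hvt⟩ := hθ.exists_piece_lt φ (L := Multiset.replicate n x)
    (fun z hz => Multiset.eq_of_mem_replicate hz ▸ hx) Λ.zero_mem (by simpa using h)
    (by simpa using ht)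
  exact ⟨v, hvs, Multiset.eq_of_mem_replicate hvx, hvt⟩

theorem mul_orderOf_le_card (hθ : IsTransferUpToMultiples θ Λ) {s : blockMonoid cls} {g : G}
    (hs : ∀ P ∈ (s : Multiset X), cls P = g) {n : ℕ} {x : A} (hx : x ∈ Λ) (hx0 : x ≠ 0)
    (h : θ s = n • x) : n * orderOf g ≤ Multiset.card (s : Multiset X) := by
  by_contra! hlt
  obtain ⟨v, hvs, rfl, hv⟩ := hθ.exists_piece_lt_of_map_eq_nsmul Multiset.cardHom hx h hlt
  refine hv.not_ge (orderOf_le_card_of_cls_eq (fun P hP => hs P (hvs hP)) ?_)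
  rintro rfl
  exact hx0 (map_zero θ)

theorem map_primaryBlock_eq_of_mem (hθ : IsTransferUpToMultiples θ Λ) (htor : IsMulTorsion G)
    {a : blockMonoid cls} {Q S : X} (ha : θ a = θ (primaryBlock cls Q))
    (hS : S ∈ (a : Multiset X)) : θ (primaryBlock cls S) = θ (primaryBlock cls Q) := by
  obtain ⟨t, ht⟩ := Multiset.exists_cons_of_mem hS
  obtain ⟨u, -, hu⟩ := exists_orderOf_nsmul_eq_primaryBlock_add a ht
  have hsplit : θ (orderOf (cls S) • primaryBlock cls Q) = θ (primaryBlock cls S) + θ u := by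
    rw [map_nsmul, ← ha, ← map_nsmul, hu, map_add]
  obtain ⟨v, hvQ, hv⟩ := hθ.exists_piece (hθ.map_mem _) (hθ.map_mem _) hsplit
  obtain ⟨j, rfl⟩ := exists_eq_nsmul_primaryBlock (v := v) (Q := Q) fun P hP =>
    Multiset.eq_of_mem_replicate (Multiset.mem_of_mem_nsmul (hvQ hP))
  rw [map_nsmul] at hv
  have hj0 : j ≠ 0 := by
    rintro rfl
    exact hθ.map_primaryBlock_ne_zero htor S (by rw [← hv, zero_nsmul])
  have hj1 : j * orderOf (cls S) ≤ 1 * orderOf (cls S) := by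
    simpa [coe_primaryBlock] using hθ.mul_orderOf_le_card (s := primaryBlock cls S)
      (fun P hP => by rw [Multiset.eq_of_mem_replicate hP]) (hθ.map_mem _)
      (hθ.map_primaryBlock_ne_zero htor Q) hv.symm
  obtain rfl : j = 1 := by
    have := Nat.le_of_mul_le_mul_right hj1 (htor (cls S)).orderOf_pos
    omega
  rw [← hv, one_nsmul]

/- With `S` of class `cls Q / cls P` and `Y` of class `(cls Q)⁻¹`, the quotient `x` of the blocks
`P S Y` and `Q Y` satisfies `m • x = θ (S ^ m)`; the pieces of this decomposition have size at
least the order of `cls S`, so that order is one. -/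
theorem cls_eq_of_orderOf_eq (hθ : IsTransferUpToMultiples θ Λ) (htor : IsMulTorsion G)
    (hcls : Function.Surjective cls) {P Q : X}
    (h : θ (primaryBlock cls P) = θ (primaryBlock cls Q))
    (hord : orderOf (cls P) = orderOf (cls Q)) : cls P = cls Q := by
  obtain ⟨S, hS⟩ := hcls (cls Q / cls P)
  obtain ⟨Y, hY⟩ := hcls (cls Q)⁻¹
  set m := orderOf (cls Q) with hm
  have hm0 : 0 < m := (htor (cls Q)).orderOf_pos
  have hYord : orderOf (cls Y) = m := by rw [hY, orderOf_inv]
  let u : blockMonoid cls := ⟨P ::ₘ S ::ₘ {Y}, by simp [mem_blockMonoid, hS, hY, div_eq_mul_inv]⟩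
  let w : blockMonoid cls := ⟨Q ::ₘ {Y}, by simp [mem_blockMonoid, hY]⟩
  let r : blockMonoid cls := ⟨Multiset.replicate m S, replicate_mem_blockMonoid (by
    rw [hS, div_pow, pow_orderOf_eq_one, ← hord, pow_orderOf_eq_one, div_one])⟩
  have hu : m • u = primaryBlock cls P + r + primaryBlock cls Y := Subtype.ext <| by
    simp [u, r, coe_primaryBlock, hord, hYord, Multiset.nsmul_cons, Multiset.nsmul_singleton,
      add_assoc]
  have hw : m • w = primaryBlock cls Q + primaryBlock cls Y := Subtype.ext <| by
    simp [w, coe_primaryBlock, ← hm, hYord, Multiset.nsmul_cons, Multiset.nsmul_singleton]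
  have hx : θ r = m • (θ u - θ w) := by
    rw [nsmul_sub, ← map_nsmul, ← map_nsmul, hu, hw, map_add, map_add, map_add, h]
    abel
  have hx0 : θ u - θ w ≠ 0 := by
    intro h0
    have hr : r = 0 := hθ.eq_zero_of_map_eq_zero (by rw [hx, h0, nsmul_zero])
    have hcard := congrArg (fun s : blockMonoid cls => Multiset.card (s : Multiset X)) hr
    simp only [r, Multiset.card_replicate, ZeroMemClass.coe_zero, Multiset.card_zero] at hcard
    exact hm0.ne' hcard
  have hle : m * orderOf (cls S) ≤ m * 1 := by
    simpa [r] using hθ.mul_orderOf_le_card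
      (fun T hT => by rw [Multiset.eq_of_mem_replicate hT])
      (hθ.mem_of_nsmul_mem hm0 (hx ▸ hθ.map_mem r)) hx0 hx
  have hS1 : cls S = 1 := orderOf_eq_one_iff.1 <|
    le_antisymm (Nat.le_of_mul_le_mul_left hle hm0) (htor (cls S)).orderOf_pos
  rw [hS, div_eq_one] at hS1
  exact hS1.symm

/- Let `n = orderOf (cls Q)`. Replacing the factor `Q ^ n` of `(Q t) ^ n` by `P ^ orderOf (cls P)`
does not change the value under `θ`, but leaves fewer than `n` copies of `P`. So some piece `v` with
the value of `Q t` avoids `P`, and all primes of `v` lie in `t`; a piece of `v ^ n` with the value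
of `Q ^ n` provides `S`. -/
theorem exists_mem_map_primaryBlock_eq (hθ : IsTransferUpToMultiples θ Λ) (htor : IsMulTorsion G)
    {P Q : X} (h : θ (primaryBlock cls P) = θ (primaryBlock cls Q))
    (hord : orderOf (cls P) < orderOf (cls Q)) {t : Multiset X}
    (ht : Q ::ₘ t ∈ blockMonoid cls) :
    ∃ S ∈ t, θ (primaryBlock cls S) = θ (primaryBlock cls Q) := by
  classical
  by_cases hPt : P ∈ t
  · exact ⟨P, hPt, h⟩
  set n := orderOf (cls Q)
  obtain ⟨u, hu, hnu⟩ := exists_orderOf_nsmul_eq_primaryBlock_add ⟨Q ::ₘ t, ht⟩ rfl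
  have hsplit : n • θ ⟨Q ::ₘ t, ht⟩ = θ (primaryBlock cls Q) + θ u := by
    rw [← map_nsmul, hnu, map_add]
  have hcount : Multiset.countAddMonoidHom P
      ((primaryBlock cls P + u : blockMonoid cls) : Multiset X) < n * 1 := by
    simpa [coe_primaryBlock, hu, Multiset.count_eq_zero_of_notMem hPt] using hord
  obtain ⟨v, hvsub, hv, hvP⟩ := hθ.exists_piece_lt_of_map_eq_nsmul (Multiset.countAddMonoidHom P)
    (n := n) (hθ.map_mem ⟨Q ::ₘ t, ht⟩) (by rw [map_add, h, hsplit]) hcount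
  have hvt : (v : Multiset X) ⊆ t := by
    intro S hS
    rcases Multiset.mem_add.1 (hvsub hS) with hSP | hSu
    · obtain rfl : S = P := Multiset.eq_of_mem_replicate hSP
      exact absurd (Multiset.count_pos.2 hS) (by simpa using hvP)
    · exact Multiset.mem_of_mem_nsmul (hu ▸ hSu)
  obtain ⟨w, hwv, hw⟩ := hθ.exists_piece (s := n • v) (hθ.map_mem (primaryBlock cls Q))
    (hθ.map_mem u) (by rw [map_nsmul, hv, hsplit])
  have hw0 : (w : Multiset X) ≠ 0 := by
    intro h0
    obtain rfl : w = 0 := Subtype.ext h0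
    exact hθ.map_primaryBlock_ne_zero htor Q (by rw [← hw, map_zero])
  obtain ⟨S, hS⟩ := Multiset.exists_mem_of_ne_zero hw0
  exact ⟨S, hvt (Multiset.mem_of_mem_nsmul (hwv hS)), hθ.map_primaryBlock_eq_of_mem htor hw hS⟩

theorem orderOf_eq_two_of_lt (hθ : IsTransferUpToMultiples θ Λ) (htor : IsMulTorsion G)
    (hcls : Function.Surjective cls) {P Q : X}
    (h : θ (primaryBlock cls P) = θ (primaryBlock cls Q))
    (hord : orderOf (cls P) < orderOf (cls Q)) : orderOf (cls Q) = 2 := by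
  obtain ⟨Y, hY⟩ := hcls (cls Q)⁻¹
  obtain ⟨S, hS, hSQ⟩ := hθ.exists_mem_map_primaryBlock_eq htor h hord (t := {Y})
    (by simp [mem_blockMonoid, hY])
  obtain rfl : S = Y := Multiset.mem_singleton.1 hS
  have hinv : (cls Q)⁻¹ = cls Q :=
    hY ▸ hθ.cls_eq_of_orderOf_eq htor hcls hSQ (by rw [hY, orderOf_inv])
  have hdvd : orderOf (cls Q) ∣ 2 := orderOf_dvd_of_pow_eq_one (by
    rw [pow_two, mul_eq_one_iff_eq_inv, hinv])
  have hpos : 0 < orderOf (cls P) := (htor (cls P)).orderOf_pos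
  have := Nat.le_of_dvd two_pos hdvd
  omega

/- Otherwise `Q` has order two and `P` is principal, so every `S` with `θ (primaryBlock S)` equal
to that of `Q` has class `1` or `cls Q`. As `G` has order different from two there is a third class
`k`, and the block with classes `cls Q, k, (cls Q * k)⁻¹` contains such an `S` besides `Q`. -/
theorem orderOf_le (hθ : IsTransferUpToMultiples θ Λ) (htor : IsMulTorsion G)
    (hcls : Function.Surjective cls) (hcard : Nat.card G ≠ 2) {P Q : X}
    (h : θ (primaryBlock cls P) = θ (primaryBlock cls Q)) :
    orderOf (cls Q) ≤ orderOf (cls P) := by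
  by_contra! hord
  have hQ2 : orderOf (cls Q) = 2 := hθ.orderOf_eq_two_of_lt htor hcls h hord
  have hQ1 : cls Q ≠ 1 := fun h1 => by simp [h1] at hQ2
  have hQinv : (cls Q)⁻¹ = cls Q := by
    rw [inv_eq_iff_mul_eq_one, ← pow_two, ← hQ2, pow_orderOf_eq_one]
  have hclasses : ∀ S, θ (primaryBlock cls S) = θ (primaryBlock cls Q) →
      cls S = 1 ∨ cls S = cls Q := by
    intro S hS
    by_cases hSord : orderOf (cls S) ≤ orderOf (cls P)
    · have := (htor (cls S)).orderOf_pos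
      exact .inl (orderOf_eq_one_iff.1 (by omega))
    · refine .inr (hθ.cls_eq_of_orderOf_eq htor hcls hS ?_)
      rw [hQ2]
      exact hθ.orderOf_eq_two_of_lt htor hcls (h.trans hS.symm) (not_le.1 hSord)
  obtain ⟨k, hk1, hkQ⟩ : ∃ k : G, k ≠ 1 ∧ k ≠ cls Q := by
    by_contra! hall
    refine hcard (Nat.card_eq_two_iff.2 ⟨1, cls Q, hQ1.symm, Set.eq_univ_of_forall fun k => ?_⟩)
    exact or_iff_not_imp_left.2 (hall k)
  obtain ⟨S, hS⟩ := hcls k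
  obtain ⟨T, hT⟩ := hcls (cls Q * k)⁻¹
  obtain ⟨U, hU, hUQ⟩ := hθ.exists_mem_map_primaryBlock_eq htor h hord (t := S ::ₘ {T})
    (by simp [mem_blockMonoid, hS, hT])
  rcases Multiset.mem_cons.1 hU with rfl | hUT
  · rcases hclasses U hUQ with h1 | h1 <;> simp_all
  · rw [Multiset.mem_singleton.1 hUT] at hUQ
    rcases hclasses T hUQ with h1 | h1 <;> rw [hT] at h1
    · rw [inv_eq_one, mul_eq_one_iff_inv_eq, hQinv] at h1
      exact hkQ h1.symm
    · rw [mul_inv, hQinv, mul_eq_left, inv_eq_one] at h1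
      exact hk1 h1

theorem cls_eq_of_map_primaryBlock_eq (hθ : IsTransferUpToMultiples θ Λ) (htor : IsMulTorsion G)
    (hcls : Function.Surjective cls) (hcard : Nat.card G ≠ 2) {P Q : X}
    (h : θ (primaryBlock cls P) = θ (primaryBlock cls Q)) : cls P = cls Q :=
  hθ.cls_eq_of_orderOf_eq htor hcls h <|
    le_antisymm (hθ.orderOf_le htor hcls hcard h.symm) (hθ.orderOf_le htor hcls hcard h)

/- By the comparison of primary blocks, every piece of `b` with the value of some `primaryBlock S`
in class `c` lies entirely in class `c`, hence has at least `orderOf c` primes there. -/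
theorem count_map_le (hθ : IsTransferUpToMultiples θ Λ) (htor : IsMulTorsion G)
    (hcls : Function.Surjective cls) (hcard : Nat.card G ≠ 2) [DecidableEq G]
    {a b : blockMonoid cls} (hab : θ a = θ b) (c : G) :
    ((a : Multiset X).map cls).count c ≤ ((b : Multiset X).map cls).count c := by
  set t := (a : Multiset X).filter (c = cls ·)
  have htc : ∀ P ∈ t, cls P = c := fun P hP => (Multiset.mem_filter.1 hP).2.symm
  let φ : Multiset X →+ ℕ := Multiset.countPAddMonoidHom (c = cls ·)
  have hφ : ∀ s : Multiset X, φ s = (s.map cls).count c := fun s => by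
    simp [φ, Multiset.count_map, Multiset.countP_eq_card_filter]
  rw [← hφ, ← hφ]
  by_contra! hlt
  obtain ⟨u, -, hu⟩ := exists_orderOf_nsmul_eq_sum_primaryBlock_add a htc
    (Multiset.filter_add_not _ _).symm
  have hsplit : θ (orderOf c • b) = (t.map fun S => θ (primaryBlock cls S)).sum + θ u := by
    rw [map_nsmul, ← hab, ← map_nsmul, hu, map_add, map_multiset_sum, Multiset.map_map]
    rfl
  have hsmall : φ (orderOf c • b : blockMonoid cls) <
      Multiset.card (t.map fun S => θ (primaryBlock cls S)) * orderOf c := by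
    have hcardt : Multiset.card t = φ a := (Multiset.countP_eq_card_filter ..).symm
    rw [AddSubmonoidClass.coe_nsmul, map_nsmul, smul_eq_mul, Multiset.card_map, hcardt, mul_comm]
    exact Nat.mul_lt_mul_of_pos_right hlt (htor c).orderOf_pos
  obtain ⟨v, -, hv, hvc⟩ := hθ.exists_piece_lt φ
    (by simpa using fun S _ => hθ.map_mem (primaryBlock cls S)) (hθ.map_mem u) hsplit hsmall
  obtain ⟨S, hS, hSv⟩ := Multiset.mem_map.1 hv
  have hvcls : ∀ P ∈ (v : Multiset X), cls P = c := fun P hP =>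
    (hθ.cls_eq_of_map_primaryBlock_eq htor hcls hcard
      (hθ.map_primaryBlock_eq_of_mem htor hSv.symm hP)).trans (htc S hS)
  have hv0 : v ≠ 0 := by
    rintro rfl
    exact hθ.map_primaryBlock_ne_zero htor S (by rw [hSv, map_zero])
  have hφv : φ v = Multiset.card (v : Multiset X) :=
    Multiset.countP_eq_card.2 fun P hP => (hvcls P hP).symm
  exact (hφv ▸ hvc).not_ge (orderOf_le_card_of_cls_eq hvcls hv0)

theorem map_cls_eq_of_map_eq (hθ : IsTransferUpToMultiples θ Λ) (htor : IsMulTorsion G)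
    (hcls : Function.Surjective cls) (hcard : Nat.card G ≠ 2) {a b : blockMonoid cls}
    (hab : θ a = θ b) : (a : Multiset X).map cls = (b : Multiset X).map cls := by
  classical
  exact le_antisymm (Multiset.le_iff_count.2 (hθ.count_map_le htor hcls hcard hab))
    (Multiset.le_iff_count.2 (hθ.count_map_le htor hcls hcard hab.symm))

end IsTransferUpToMultiples

section RegularElements

variable {R : Type*} [CommRing R] {f : Ideal R} {a b : R}

theorem RegF.of_dvd (hb : RegF f b) (hab : a ∣ b) : RegF f a :=
  isUnit_of_dvd_unit (map_dvd _ hab) hb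

theorem RegF.pow (ha : RegF f a) (n : ℕ) : RegF f (a ^ n) := by
  simpa only [RegF, map_pow] using IsUnit.pow n ha

theorem regF_iff_isCoprime : RegF f a ↔ IsCoprime (Ideal.span {a}) f := by
  rw [Ideal.isCoprime_iff_exists]
  constructor
  · intro ha
    obtain ⟨b', hb'⟩ := IsUnit.exists_right_inv ha
    obtain ⟨b, rfl⟩ := Ideal.Quotient.mk_surjective b'
    rw [← map_mul, ← map_one (Ideal.Quotient.mk f), eq_comm, Ideal.Quotient.eq] at hb'
    exact ⟨a * b, Ideal.mem_span_singleton.2 ⟨b, rfl⟩, _, hb', by ring⟩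
  · rintro ⟨i, hi, j, hj, hij⟩
    obtain ⟨b, rfl⟩ := Ideal.mem_span_singleton.1 hi
    refine IsUnit.of_mul_eq_one (Ideal.Quotient.mk f b) ?_
    rw [← map_mul, ← map_one (Ideal.Quotient.mk f), eq_comm, Ideal.Quotient.eq, ← hij]
    simpa using hj

theorem RegF.exists_pow_mem {O : Subring R} (htors : IsMulTorsion (R ⧸ O.conductor)ˣ)
    (ha : RegF O.conductor a) : ∃ n : ℕ, 0 < n ∧ a ^ n ∈ O := by
  obtain ⟨u, hu⟩ := ha
  obtain ⟨n, hn, hun⟩ := isOfFinOrder_iff_pow_eq_one.1 (htors u)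
  have hmem : a ^ n - 1 ∈ O.conductor := by
    rw [← Ideal.Quotient.eq, map_pow, ← hu, ← Units.val_pow_eq_pow_val, hun, Units.val_one,
      map_one]
  refine ⟨n, hn, ?_⟩
  simpa using O.add_mem (hmem 1) O.one_mem

end RegularElements

theorem IsKrullMonoid.dvd_of_pow_dvd_pow {M : Type*} [CommMonoid M] (hM : IsKrullMonoid M)
    {a b : M} {n : ℕ} (hn : 0 < n) (h : a ^ n ∣ b ^ n) : a ∣ b := by
  obtain ⟨ι, d, hd⟩ := hM
  refine hd a b ?_
  obtain ⟨c, hc⟩ := map_dvd d h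
  have hle : (d a).toAdd ≤ (d b).toAdd := by
    intro i
    have hi := DFunLike.congr_fun (congrArg Multiplicative.toAdd hc) i
    simp only [map_pow, toAdd_pow, toAdd_mul, Finsupp.smul_apply, Finsupp.add_apply,
      smul_eq_mul] at hi
    exact Nat.le_of_mul_le_mul_left (hi ▸ Nat.le_add_right _ _) hn
  obtain ⟨e, he⟩ := exists_add_of_le hle
  exact ⟨.ofAdd e, he⟩

section DivisibilityGroup

variable {K : Type*} [CommMonoid K] (H : Submonoid K)

/-- The group of divisibility of a submonoid `H` of `K`, written additively: the units of `K`
modulo the units of `H`. -/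
def DivisibilityGroup : Type _ := Additive (Kˣ ⧸ H.units)

instance : AddCommGroup (DivisibilityGroup H) :=
  inferInstanceAs (AddCommGroup (Additive (Kˣ ⧸ H.units)))

/-- The class of a unit of `K` in the group of divisibility of `H`. -/
def divClass : Additive Kˣ →+ DivisibilityGroup H :=
  (QuotientGroup.mk' H.units).toAdditive

/-- The cone of integral elements in the group of divisibility: the classes of the units of `K`
lying in `H`. -/
def divisibilityCone : AddSubmonoid (DivisibilityGroup H) :=
  (H.comap (Units.coeHom K)).toAddSubmonoid.map (divClass H)

variable {H}

theorem divClass_surjective : Function.Surjective (divClass H) :=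
  QuotientGroup.mk'_surjective H.units

end DivisibilityGroup

section AssocIn

variable {K : Type*} [CommRing K] {H : Submonoid K}

theorem divClass_eq_iff {x y : Kˣ} :
    divClass H (.ofMul x) = divClass H (.ofMul y) ↔ AssocIn H (x : K) y := by
  have hmk : divClass H (.ofMul x) = divClass H (.ofMul y) ↔ y⁻¹ * x ∈ H.units :=
    eq_comm.trans QuotientGroup.eq
  rw [hmk, Submonoid.mem_units_iff]
  constructor
  · rintro ⟨h, h'⟩
    exact ⟨_, h, ⟨_, h', Units.mul_inv _⟩, by simp⟩
  · rintro ⟨ε, hε, ⟨ε', hε', hεε'⟩, hx⟩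
    have hval : ((y⁻¹ * x : Kˣ) : K) = ε := by simp [hx]
    exact ⟨hval ▸ hε, Units.inv_eq_of_mul_eq_one_right (hval ▸ hεε') ▸ hε'⟩

theorem divClass_mem_divisibilityCone {x : Kˣ} :
    divClass H (.ofMul x) ∈ divisibilityCone H ↔ (x : K) ∈ H := by
  constructor
  · rintro ⟨y, hy, hyx⟩
    obtain ⟨ε, hε, -, hx⟩ := divClass_eq_iff.1 hyx.symm
    exact hx ▸ H.mul_mem hy hε
  · exact fun hx => ⟨.ofMul x, hx, rfl⟩

theorem mem_divisibilityCone_of_nsmul_mem {n : ℕ} (hroot : ∀ x : K, x ^ n ∈ H → x ∈ H)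
    {x : DivisibilityGroup H} (h : n • x ∈ divisibilityCone H) : x ∈ divisibilityCone H := by
  obtain ⟨u, rfl⟩ := divClass_surjective x
  rw [← map_nsmul] at h
  refine divClass_mem_divisibilityCone.2 (hroot _ ?_)
  exact divClass_mem_divisibilityCone (x := u.toMul ^ n).1 h

theorem AssocIn.eq_zero_iff {x y : K} (h : AssocIn H x y) : x = 0 ↔ y = 0 := by
  obtain ⟨ε, -, ⟨ε', -, hε⟩, rfl⟩ := h
  exact (IsUnit.of_mul_eq_one ε' hε).mul_left_eq_zero

end AssocIn

section Overmonoid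

variable {R : Type*} [CommRing R]

/-- The inclusion of the nonzero elements of `R` into the units of its field of fractions. -/
noncomputable def fractionUnit : R⁰ →* (FractionRing R)ˣ :=
  IsUnit.liftRight ((algebraMap R (FractionRing R) : R →* FractionRing R).domRestrict R⁰)
    (IsLocalization.map_units (FractionRing R))

theorem coe_fractionUnit (a : R⁰) : (fractionUnit a : FractionRing R) = algebraMap R _ a :=
  rfl

/-- The class of a nonzero element of `R` in the group of divisibility of `H`. -/
noncomputable def ringDivClass (H : Submonoid (FractionRing R)) :
    Additive R⁰ →+ DivisibilityGroup H :=
  (divClass H).comp fractionUnit.toAdditive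

theorem ringDivClass_eq_iff {H : Submonoid (FractionRing R)} {a b : R⁰} :
    ringDivClass H (.ofMul a) = ringDivClass H (.ofMul b) ↔
      AssocIn H (algebraMap R (FractionRing R) a) (algebraMap R (FractionRing R) b) :=
  divClass_eq_iff

theorem ringDivClass_mem_divisibilityCone {H : Submonoid (FractionRing R)} {a : R⁰} :
    ringDivClass H (.ofMul a) ∈ divisibilityCone H ↔ algebraMap R (FractionRing R) a ∈ H :=
  divClass_mem_divisibilityCone

namespace IsTKOvermonoid

variable [IsDomain R] [IsDedekindDomain R] {O : Subring R} {H : Submonoid (FractionRing R)}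

theorem mem_of_pow_mem (hH : IsTKOvermonoid O H) (hcond : O.conductor ≠ ⊥) {n : ℕ} (hn : 0 < n)
    {x : FractionRing R} (hx : x ^ n ∈ H) : x ∈ H := by
  have hx0 : x ≠ 0 := fun h => hH.nonzero _ hx (by rw [h, zero_pow hn.ne'])
  obtain ⟨p, q, hq, rfl⟩ := IsFractionRing.div_surjective (A := R) x
  obtain ⟨c, hc, hc0⟩ := Submodule.exists_mem_ne_zero_of_ne_bot hcond
  have hp0 : p ≠ 0 := by
    rintro rfl
    simp at hx0
  have hq0 : q ≠ 0 := nonZeroDivisors.ne_zero hq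
  have hcq0 : algebraMap R (FractionRing R) (c * q) ≠ 0 := by simp [hc0, hq0]
  have hcp := hH.incl (c * p) (hc p) (mul_ne_zero hc0 hp0)
  have hcq := hH.incl (c * q) (hc q) (mul_ne_zero hc0 hq0)
  have hmul : algebraMap R (FractionRing R) (c * p) = algebraMap R (FractionRing R) (c * q) *
      (algebraMap R (FractionRing R) p / algebraMap R (FractionRing R) q) := by
    have : algebraMap R (FractionRing R) q ≠ 0 := by simpa using hq0
    simp only [map_mul]
    field_simp
  have hdvd : (⟨_, hcq⟩ : H) ∣ ⟨_, hcp⟩ :=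
    hH.krull.dvd_of_pow_dvd_pow hn ⟨⟨_, hx⟩, Subtype.ext (by
      simp only [SubmonoidClass.mk_pow, Submonoid.mk_mul_mk, ← mul_pow, ← hmul])⟩
  obtain ⟨y, hy⟩ := hdvd
  have hxy := hmul.symm.trans (congrArg Subtype.val hy)
  exact mul_left_cancel₀ hcq0 hxy ▸ y.2

theorem algebraMap_mem_of_regF (hH : IsTKOvermonoid O H) (hcond : O.conductor ≠ ⊥)
    (htors : IsMulTorsion (R ⧸ O.conductor)ˣ) {a : R} (ha0 : a ≠ 0) (ha : RegF O.conductor a) :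
    algebraMap R (FractionRing R) a ∈ H := by
  obtain ⟨n, hn, han⟩ := ha.exists_pow_mem htors
  refine hH.mem_of_pow_mem hcond hn ?_
  rw [← map_pow]
  exact hH.incl _ han (pow_ne_zero n ha0)

theorem ringDivClass_eq_of_associated (hH : IsTKOvermonoid O H) (hcond : O.conductor ≠ ⊥)
    (htors : IsMulTorsion (R ⧸ O.conductor)ˣ) {a b : R⁰} (hab : Associated (a : R) b) :
    ringDivClass H (.ofMul a) = ringDivClass H (.ofMul b) := by
  have hunit (u : Rˣ) : algebraMap R (FractionRing R) u ∈ H :=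
    hH.algebraMap_mem_of_regF hcond htors u.ne_zero (u.isUnit.map _)
  obtain ⟨u, hu⟩ := hab.symm
  refine ringDivClass_eq_iff.2 ⟨_, hunit u, ⟨_, hunit u⁻¹, ?_⟩, ?_⟩
  · rw [← map_mul, Units.mul_inv, map_one]
  · rw [← map_mul, hu]

theorem isUnit_of_ringDivClass_eq_zero (hH : IsTKOvermonoid O H) {c : R⁰} (hc : (c : R) ∈ O)
    (h : ringDivClass H (.ofMul c) = 0) : IsUnit (c : R) := by
  have h1 : ringDivClass H (.ofMul c) = ringDivClass H (.ofMul 1) := by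
    rw [h, ofMul_one, map_zero]
  obtain ⟨ε, -, ⟨ε', hε', hεε'⟩, hcε⟩ := ringDivClass_eq_iff.1 h1
  rw [OneMemClass.coe_one, map_one, one_mul] at hcε
  obtain ⟨b, -, hb⟩ := hH.t1' c hc (nonZeroDivisors.coe_ne_zero c) ⟨ε', hε', hcε ▸ hεε'⟩
  exact IsUnit.of_mul_eq_one b hb

theorem exists_eq_mul_of_ringDivClass_eq_add (hH : IsTKOvermonoid O H) {c : R⁰}
    (hc : (c : R) ∈ O) {x y : DivisibilityGroup H} (hx : x ∈ divisibilityCone H)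
    (hy : y ∈ divisibilityCone H) (h : ringDivClass H (.ofMul c) = x + y) :
    ∃ v w : R⁰, (w : R) ∈ O ∧ c = v * w ∧
      ringDivClass H (.ofMul v) = x ∧ ringDivClass H (.ofMul w) = y := by
  obtain ⟨u, rfl⟩ := divClass_surjective x
  obtain rfl : y = divClass H (.ofMul (u.toMul⁻¹ * fractionUnit c)) := by
    rw [ofMul_mul, map_add, ofMul_inv, map_neg]
    exact eq_neg_add_of_add_eq h.symm
  obtain ⟨v, w, -, hw, hcvw, hv', hw'⟩ := hH.t2 c hc (nonZeroDivisors.coe_ne_zero c) _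
    (divClass_mem_divisibilityCone.1 hx) _ (divClass_mem_divisibilityCone.1 hy)
    (by rw [Units.val_mul, coe_fractionUnit]; exact (Units.mul_inv_cancel_left u.toMul _).symm)
  have hvw0 : v * w ≠ 0 := hcvw ▸ nonZeroDivisors.coe_ne_zero c
  let v₀ : R⁰ := ⟨v, mem_nonZeroDivisors_of_ne_zero (left_ne_zero_of_mul hvw0)⟩
  let w₀ : R⁰ := ⟨w, mem_nonZeroDivisors_of_ne_zero (right_ne_zero_of_mul hvw0)⟩
  exact ⟨v₀, w₀, hw, Subtype.ext hcvw, divClass_eq_iff (x := fractionUnit v₀).2 hv',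
    divClass_eq_iff (x := fractionUnit w₀).2 hw'⟩

theorem exists_associated_prod (hH : IsTKOvermonoid O H) {L : Multiset (DivisibilityGroup H)}
    (hL : ∀ x ∈ L, x ∈ divisibilityCone H) {c : R⁰} (hc : (c : R) ∈ O)
    (h : ringDivClass H (.ofMul c) = L.sum) :
    ∃ C : Multiset R⁰, Associated (c : R) C.prod ∧
      C.map (fun v => ringDivClass H (.ofMul v)) = L := by
  induction L using Multiset.induction_on generalizing c with
  | empty =>
    have hunit := hH.isUnit_of_ringDivClass_eq_zero hc h
    exact ⟨0, by simpa using associated_one_iff_isUnit.2 hunit, rfl⟩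
  | cons x L ih =>
    rw [Multiset.forall_mem_cons] at hL
    rw [Multiset.sum_cons] at h
    obtain ⟨v, w, hw, rfl, hvx, hwL⟩ := hH.exists_eq_mul_of_ringDivClass_eq_add hc hL.1
      (AddSubmonoid.multiset_sum_mem _ L hL.2) h
    obtain ⟨C, hC, rfl⟩ := ih hL.2 hw hwL
    refine ⟨v ::ₘ C, ?_, by rw [Multiset.map_cons, hvx]⟩
    rw [Multiset.prod_cons, Submonoid.coe_mul, Submonoid.coe_mul]
    exact hC.mul_left _

end IsTKOvermonoid

end Overmonoid

section RegularPrimes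

open IsDedekindDomain UniqueFactorizationMonoid

variable {R : Type*} [CommRing R] [IsDedekindDomain R] {f : Ideal R}

/-- The nonzero prime ideals of `R` that do not contain `f`, i.e. are coprime to `f`. -/
abbrev RegularPrime (f : Ideal R) : Type _ :=
  {v : HeightOneSpectrum R // ¬ f ≤ v.asIdeal}

/-- A regular prime as a nonzero ideal. -/
def RegularPrime.ideal (v : RegularPrime f) : (Ideal R)⁰ :=
  ⟨v.1.asIdeal, mem_nonZeroDivisors_of_ne_zero v.1.ne_bot⟩

theorem RegularPrime.ideal_injective :
    Function.Injective fun v : RegularPrime f => (v.ideal : Ideal R) :=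
  fun _ _ h => Subtype.ext (HeightOneSpectrum.ext h)

/-- The ideal `aR` is the product of the regular primes in `s`, with multiplicity. -/
def FactorsAs (a : R) (s : Multiset (RegularPrime f)) : Prop :=
  Ideal.span {a} = ((s.map RegularPrime.ideal).prod : (Ideal R)⁰)

theorem coe_prod_map_ideal (s : Multiset (RegularPrime f)) :
    (((s.map RegularPrime.ideal).prod : (Ideal R)⁰) : Ideal R) =
      (s.map fun v => (v.ideal : Ideal R)).prod := by
  rw [Submonoid.coe_multiset_prod, Multiset.map_map]
  rfl

theorem exists_factorsAs {a : R} (ha0 : a ≠ 0) (ha : RegF f a) :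
    ∃ s : Multiset (RegularPrime f), FactorsAs a s := by
  have hspan : Ideal.span {a} ≠ ⊥ := by rwa [Ne, Ideal.span_singleton_eq_bot]
  have hreg : ∀ I ∈ normalizedFactors (Ideal.span {a}),
      ∃ v : RegularPrime f, (v.ideal : Ideal R) = I := by
    intro I hI
    have hprime := prime_of_normalized_factor I hI
    have haI : Ideal.span {a} ≤ I := Ideal.dvd_iff_le.1 (dvd_of_mem_normalizedFactors hI)
    refine ⟨⟨⟨I, Ideal.isPrime_of_prime hprime, hprime.ne_zero⟩, fun hfI => ?_⟩, rfl⟩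
    have hsup : Ideal.span {a} ⊔ f = ⊤ :=
      Ideal.isCoprime_iff_sup_eq.1 (regF_iff_isCoprime.1 ha)
    exact (Ideal.isPrime_of_prime hprime).ne_top (top_le_iff.1 (hsup ▸ sup_le haI hfI))
  choose v hv using hreg
  refine ⟨(normalizedFactors (Ideal.span {a})).attach.map fun I => v I.1 I.2, ?_⟩
  rw [FactorsAs, coe_prod_map_ideal, Multiset.map_map]
  simp only [Function.comp_def, hv, Multiset.attach_map_val,
    Ideal.prod_normalizedFactors_eq_self hspan]

namespace FactorsAs

variable {a b : R} {s t : Multiset (RegularPrime f)}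

theorem one_zero : FactorsAs (1 : R) (0 : Multiset (RegularPrime f)) := by
  simp [FactorsAs]

theorem mul (ha : FactorsAs a s) (hb : FactorsAs b t) : FactorsAs (a * b) (s + t) := by
  rw [FactorsAs, ← Ideal.span_singleton_mul_span_singleton, ha, hb, Multiset.map_add,
    Multiset.prod_add, Submonoid.coe_mul]

theorem pow (ha : FactorsAs a s) (n : ℕ) : FactorsAs (a ^ n) (n • s) := by
  rw [FactorsAs, ← Ideal.span_singleton_pow, ha, Multiset.map_nsmul, Multiset.prod_nsmul,
    SubmonoidClass.coe_pow]

theorem ne_zero (ha : FactorsAs a s) : a ≠ 0 := by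
  rw [Ne, ← Ideal.span_singleton_eq_bot, ha]
  exact nonZeroDivisors.coe_ne_zero _

theorem congr (ha : FactorsAs a s) (hab : Associated a b) : FactorsAs b s :=
  (Ideal.span_singleton_eq_span_singleton.2 hab.symm).trans ha

theorem associated (ha : FactorsAs a s) (hb : FactorsAs b s) : Associated a b :=
  Ideal.span_singleton_eq_span_singleton.1 (ha.trans hb.symm)

theorem normalizedFactors_span (ha : FactorsAs a s) :
    normalizedFactors (Ideal.span {a}) = s.map fun v => (v.ideal : Ideal R) := by
  rw [ha, coe_prod_map_ideal, normalizedFactors_prod_of_prime]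
  intro I hI
  obtain ⟨v, -, rfl⟩ := Multiset.mem_map.1 hI
  exact v.1.prime

theorem unique (hs : FactorsAs a s) (ht : FactorsAs a t) : s = t :=
  Multiset.map_injective RegularPrime.ideal_injective <|
    hs.normalizedFactors_span.symm.trans ht.normalizedFactors_span

theorem regF (ha : FactorsAs a s) : RegF f a := by
  rw [regF_iff_isCoprime]
  refine Ideal.coprime_of_no_prime_ge fun P haP hfP hP => ?_
  rw [ha, coe_prod_map_ideal, hP.multiset_prod_map_le] at haP
  obtain ⟨v, -, hvP⟩ := haP
  exact v.2 ((v.1.isMaximal.eq_of_le hP.ne_top hvP).symm ▸ hfP)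

end FactorsAs

end RegularPrimes

section BlockHom

variable {R : Type*} [CommRing R] [IsDomain R] [IsDedekindDomain R] {f : Ideal R}

/-- The ideal class of a regular prime. -/
noncomputable def RegularPrime.idealClass (v : RegularPrime f) : ClassGroup R :=
  ClassGroup.mk0 v.ideal

theorem RegularPrime.idealClass_surjective
    (h : ∀ c : ClassGroup R, ∃ (P : Ideal R) (hP : P ∈ (Ideal R)⁰),
      P.IsPrime ∧ ¬ f ≤ P ∧ ClassGroup.mk0 ⟨P, hP⟩ = c) :
    Function.Surjective (RegularPrime.idealClass (f := f)) := by
  intro c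
  obtain ⟨P, hP, hprime, hfP, rfl⟩ := h c
  exact ⟨⟨⟨P, hprime, nonZeroDivisors.ne_zero hP⟩, hfP⟩, rfl⟩

theorem FactorsAs.blockOf_eq {a : R} {s : Multiset (RegularPrime f)} (ha : FactorsAs a s) :
    blockOf a = s.map RegularPrime.idealClass := by
  rw [blockOf, ha.normalizedFactors_span, Multiset.map_map]
  exact Multiset.map_congr rfl fun v _ => dif_pos v.ideal.2

theorem mem_blockMonoid_iff_exists_factorsAs {s : Multiset (RegularPrime f)} :
    s ∈ blockMonoid RegularPrime.idealClass ↔ ∃ a : R⁰, FactorsAs (a : R) s := by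
  have hprod : (s.map RegularPrime.idealClass).prod =
      ClassGroup.mk0 (s.map RegularPrime.ideal).prod := by
    rw [map_multiset_prod, Multiset.map_map]
    rfl
  rw [mem_blockMonoid, hprod, ClassGroup.mk0_eq_one_iff (Subtype.coe_prop _)]
  constructor
  · rintro ⟨a, ha⟩
    have has : FactorsAs a s := ha.symm
    exact ⟨⟨a, mem_nonZeroDivisors_of_ne_zero has.ne_zero⟩, has⟩
  · rintro ⟨a, ha⟩
    exact ⟨a, ha.symm⟩

theorem exists_coe_factorsAs {a : R⁰} (ha : RegF f (a : R)) :
    ∃ s : blockMonoid (RegularPrime.idealClass (f := f)),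
      FactorsAs (a : R) (s : Multiset (RegularPrime f)) := by
  obtain ⟨s, hs⟩ := exists_factorsAs (nonZeroDivisors.coe_ne_zero a) ha
  exact ⟨⟨s, mem_blockMonoid_iff_exists_factorsAs.2 ⟨a, hs⟩⟩, hs⟩

/-- A generator of the principal ideal whose prime factorization is the given block. -/
noncomputable def blockGenerator (s : blockMonoid (RegularPrime.idealClass (f := f))) : R⁰ :=
  (mem_blockMonoid_iff_exists_factorsAs.1 s.2).choose

theorem factorsAs_blockGenerator (s : blockMonoid (RegularPrime.idealClass (f := f))) :
    FactorsAs (blockGenerator s : R) (s : Multiset (RegularPrime f)) :=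
  (mem_blockMonoid_iff_exists_factorsAs.1 s.2).choose_spec

variable {A : Type*} [AddCommGroup A]

/-- The homomorphism on the block monoid of the regular primes induced by a homomorphism `ψ` on the
nonzero elements of `R` that is constant on associates: it sends the prime factorization of `a` to
`ψ a`. -/
noncomputable def blockHom (ψ : Additive R⁰ →+ A)
    (hψ : ∀ a b : R⁰, Associated (a : R) b → ψ (.ofMul a) = ψ (.ofMul b)) :
    blockMonoid (RegularPrime.idealClass (f := f)) →+ A where
  toFun s := ψ (.ofMul (blockGenerator s))
  map_zero' := by
    rw [← map_zero ψ, ← ofMul_one]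
    exact hψ _ _ ((factorsAs_blockGenerator 0).associated .one_zero)
  map_add' s t := by
    rw [← map_add, ← ofMul_mul]
    exact hψ _ _ ((factorsAs_blockGenerator (s + t)).associated
      ((factorsAs_blockGenerator s).mul (factorsAs_blockGenerator t)))

variable {ψ : Additive R⁰ →+ A}
  {hψ : ∀ a b : R⁰, Associated (a : R) b → ψ (.ofMul a) = ψ (.ofMul b)}

theorem blockHom_apply {s : blockMonoid (RegularPrime.idealClass (f := f))} {a : R⁰}
    (ha : FactorsAs (a : R) (s : Multiset (RegularPrime f))) :
    blockHom ψ hψ s = ψ (.ofMul a) :=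
  hψ _ _ ((factorsAs_blockGenerator s).associated ha)

theorem exists_map_blockHom_eq {C : Multiset R⁰} (hC : ∀ c ∈ C, RegF f (c : R)) :
    ∃ V : Multiset (blockMonoid (RegularPrime.idealClass (f := f))),
      FactorsAs (C.prod : R) (V.sum : Multiset (RegularPrime f)) ∧
        V.map (blockHom ψ hψ) = C.map fun c => ψ (.ofMul c) := by
  induction C using Multiset.induction_on with
  | empty => exact ⟨0, .one_zero, rfl⟩
  | cons c C ih =>
    rw [Multiset.forall_mem_cons] at hC
    obtain ⟨s, hs⟩ := exists_coe_factorsAs hC.1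
    obtain ⟨V, hV, hVψ⟩ := ih hC.2
    refine ⟨s ::ₘ V, ?_, by rw [Multiset.map_cons, Multiset.map_cons, blockHom_apply hs, hVψ]⟩
    rw [Multiset.prod_cons, Multiset.sum_cons]
    exact hs.mul hV

theorem IsTKOvermonoid.isTransferUpToMultiples_blockHom {O : Subring R}
    {H : Submonoid (FractionRing R)} (hH : IsTKOvermonoid O H) (hcond : O.conductor ≠ ⊥)
    (htors : IsMulTorsion (R ⧸ O.conductor)ˣ) :
    IsTransferUpToMultiples
      (blockHom (f := O.conductor) (ringDivClass H)
        fun _ _ => hH.ringDivClass_eq_of_associated hcond htors)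
      (divisibilityCone H) where
  map_mem s := by
    have ha := factorsAs_blockGenerator s
    rw [blockHom_apply ha, ringDivClass_mem_divisibilityCone]
    exact hH.algebraMap_mem_of_regF hcond htors ha.ne_zero ha.regF
  mem_of_nsmul_mem hn := mem_divisibilityCone_of_nsmul_mem fun _ => hH.mem_of_pow_mem hcond hn
  exists_lift s L hL h := by
    have ha := factorsAs_blockGenerator s
    obtain ⟨N, hN, haN⟩ := ha.regF.exists_pow_mem htors
    rw [blockHom_apply ha] at h
    have hpow : ringDivClass H (.ofMul (blockGenerator s ^ N)) = (N • L).sum := by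
      rw [ofMul_pow, map_nsmul, h, Multiset.sum_nsmul]
    obtain ⟨C, haC, hCL⟩ := hH.exists_associated_prod
      (fun x hx => hL x (Multiset.mem_of_mem_nsmul hx)) (c := blockGenerator s ^ N) haN hpow
    have hCreg : ∀ c ∈ C, RegF O.conductor (c : R) := fun c hc =>
      (ha.regF.pow N).of_dvd <|
        (map_dvd R⁰.subtype (Multiset.dvd_prod hc)).trans haC.symm.dvd
    obtain ⟨V, hV, hVC⟩ := exists_map_blockHom_eq (ψ := ringDivClass H)
      (hψ := fun _ _ => hH.ringDivClass_eq_of_associated hcond htors) hCreg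
    exact ⟨N, hN, V, Subtype.ext (hV.unique ((ha.pow N).congr haC)), hVC.trans hCL⟩

end BlockHom

theorem block_eq_of_assoc_general
    {R : Type*} [CommRing R] [IsDomain R] [IsDedekindDomain R]
    (O : Subring R) (htor : IsMulTorsion (ClassGroup R))
    (htors : IsMulTorsion (R ⧸ O.conductor)ˣ)
    (hcls : ∀ c : ClassGroup R, ∃ (P : Ideal R) (hP : P ∈ (Ideal R)⁰),
      P.IsPrime ∧ ¬ O.conductor ≤ P ∧ ClassGroup.mk0 ⟨P, hP⟩ = c)
    (H : Submonoid (FractionRing R)) (hH : IsTKOvermonoid O H)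
    (hcard : Nat.card (ClassGroup R) ≠ 2)
    (a b : R) (hrega : RegF O.conductor a) (hregb : RegF O.conductor b)
    (hassoc : AssocIn H (algebraMap R (FractionRing R) a)
      (algebraMap R (FractionRing R) b)) :
    blockOf a = blockOf b := by
  have hab0 : a = 0 ↔ b = 0 := by simpa using hassoc.eq_zero_iff
  by_cases ha0 : a = 0
  · rw [ha0, hab0.1 ha0]
  have hcond : O.conductor ≠ ⊥ := by
    obtain ⟨P, -, -, hP, -⟩ := hcls 1
    exact fun h => hP (h ▸ bot_le)
  let a₀ : R⁰ := ⟨a, mem_nonZeroDivisors_of_ne_zero ha0⟩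
  let b₀ : R⁰ := ⟨b, mem_nonZeroDivisors_of_ne_zero (mt hab0.2 ha0)⟩
  have hθ := hH.isTransferUpToMultiples_blockHom hcond htors
  obtain ⟨s, has⟩ := exists_coe_factorsAs (a := a₀) hrega
  obtain ⟨t, hbt⟩ := exists_coe_factorsAs (a := b₀) hregb
  rw [has.blockOf_eq, hbt.blockOf_eq]
  refine hθ.map_cls_eq_of_map_eq htor (RegularPrime.idealClass_surjective hcls) hcard ?_
  rw [blockHom_apply has, blockHom_apply hbt]
  exact ringDivClass_eq_iff.2 hassoc

theorem block_eq_of_assoc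
    {R : Type*} [CommRing R] [IsDomain R] [IsDedekindDomain R]
    (O : Subring R) (hne : O ≠ ⊤) (hfg : Module.Finite ↥O R)
    (hfrac : ∀ r : R, ∃ a b : ↥O, (b : R) ≠ 0 ∧ (b : R) * r = (a : R))
    (htor : ∀ c : ClassGroup R, ∃ n : ℕ, 0 < n ∧ c ^ n = 1)
    (hfin : Finite (R ⧸ O.conductor))
    (hcls : ∀ c : ClassGroup R, ∃ (P : Ideal R) (hP : P ∈ (Ideal R)⁰),
      P.IsPrime ∧ ¬ O.conductor ≤ P ∧ ClassGroup.mk0 ⟨P, hP⟩ = c)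
    (H : Submonoid (FractionRing R)) (hH : IsTKOvermonoid O H)
    (hcard : Nat.card (ClassGroup R) ≠ 2)
    (a b : R) (hrega : RegF O.conductor a) (hregb : RegF O.conductor b)
    (hassoc : AssocIn H (algebraMap R (FractionRing R) a)
      (algebraMap R (FractionRing R) b)) :
    blockOf a = blockOf b := by
  exact block_eq_of_assoc_general O (fun c => isOfFinOrder_iff_pow_eq_one.2 (htor c))
    isMulTorsion_of_finite hcls H hH hcard a b hrega hregb hassoc
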